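/- Let n ≥ 1, d ∈ ℝ^n with d > 0 entrywise, and y ∈ ℝ^n. If there exists x ∈ M_d(y) with x ≠ y (i.e., M_d(y) is not the singleton {y}), then the affine dimension of the convex polytope M_d(y) equals n − 1; that is, the ℝ-vector span of { u − v : u, v ∈ M_d(y) } has dimension n − 1. -/

import Mathlib

open Finset

noncomputable def th {n : ℕ} (d y : Fin n → ℝ) (c : ℝ) : ℝ :=
  sInf ((fun i => (∑ j, max (y j - y i / d i * d j) 0) + y i / d i * c) ''
    {i : Fin n | 0 < d i})

noncomputable def psum {n : ℕ} (d : Fin n → ℝ) (σ : Equiv.Perm (Fin n)) (j : ℕ) : ℝ :=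
  ∑ i ∈ Finset.univ.filter (fun i : Fin n => (i : ℕ) < j), d (σ i)

noncomputable def Emap {n : ℕ} (d y : Fin n → ℝ) (σ : Equiv.Perm (Fin n)) : Fin n → ℝ :=
  fun k => th d y (psum d σ ((σ.symm k : ℕ) + 1)) - th d y (psum d σ (σ.symm k : ℕ))

def dStoch {n : ℕ} (d : Fin n → ℝ) (A : Matrix (Fin n) (Fin n) ℝ) : Prop :=
  (∀ i j, 0 ≤ A i j) ∧ (∀ j, ∑ i, A i j = 1) ∧ A.mulVec d = d

def Mset {n : ℕ} (d y : Fin n → ℝ) : Set (Fin n → ℝ) :=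
  {x | ∃ A : Matrix (Fin n) (Fin n) ℝ, dStoch d A ∧ A.mulVec y = x}

noncomputable def Aentry {n : ℕ} (d : Fin n → ℝ) (σ τ : Equiv.Perm (Fin n))
    (α : ℕ → Fin n) (j k : Fin n) : ℝ :=
  if k = α j.val ∧ (α j.val).val < (α (j.val + 1)).val then
    (psum d τ ((α j.val).val + 1) - psum d σ j.val) / d (τ (α j.val))
  else if (α j.val).val < k.val ∧ k.val < (α (j.val + 1)).val then 1
  else if (α j.val).val < (α (j.val + 1)).val ∧ k = α (j.val + 1) then
    (psum d σ (j.val + 1) - psum d τ (α (j.val + 1)).val) / d (τ (α (j.val + 1)))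
  else if α j.val = α (j.val + 1) ∧ k = α (j.val + 1) then
    d (σ j) / d (τ (α (j.val + 1)))
  else 0

noncomputable def Amat {n : ℕ} (d : Fin n → ℝ) (σ τ : Equiv.Perm (Fin n))
    (α : ℕ → Fin n) : Matrix (Fin n) (Fin n) ℝ :=
  Matrix.of fun p q => Aentry d σ τ α (σ.symm p) (τ.symm q)

/-!
A multiple of `d` is fixed by every `d`-stochastic matrix, so a nontrivial polytope forces two of
the ratios `y i / d i` to differ. A `d`-stochastic matrix can move mass between two coordinates
`i`, `j` with different ratios, in the direction `e i - e j`; if the ratios agree, one passes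
through a third coordinate `k` with a different ratio. Hence all `e i - e j` are directions of
the polytope. They span the hyperplane of vectors with coordinate sum `0`, and column sums `1`
allow no further directions.
-/

section

open Matrix

section SumZero

variable {R ι : Type*} [Fintype ι]

/-- The submodule of vectors with vanishing coordinate sum. It contains the directions of every
polytope on which the coordinate sum is constant. -/
def sumZeroSubmodule (R ι : Type*) [Fintype ι] [Ring R] : Submodule R (ι → R) :=
  LinearMap.ker (∑ i, LinearMap.proj i : (ι → R) →ₗ[R] R)

lemma mem_sumZeroSubmodule [Ring R] {w : ι → R} :
    w ∈ sumZeroSubmodule R ι ↔ ∑ i, w i = 0 := by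
  simp [sumZeroSubmodule]

lemma sumZeroSubmodule_le_of_single_sub_single_mem [Ring R] [DecidableEq ι]
    {W : Submodule R (ι → R)}
    (hW : ∀ i j, (Pi.single i 1 - Pi.single j 1 : ι → R) ∈ W) : sumZeroSubmodule R ι ≤ W := by
  intro w hw
  rw [mem_sumZeroSubmodule] at hw
  rcases isEmpty_or_nonempty ι with _ | ⟨⟨i₀⟩⟩
  · simp [Subsingleton.elim w 0]
  have hw_eq : w = ∑ i, w i • (Pi.single i 1 - Pi.single i₀ 1 : ι → R) := by
    simpa only [smul_sub, Finset.sum_sub_distrib, ← Finset.sum_smul, hw, zero_smul, sub_zero]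
      using pi_eq_sum_univ' w
  rw [hw_eq]
  exact W.sum_mem fun i _ => W.smul_mem _ (hW i i₀)

lemma finrank_sumZeroSubmodule [Field R] :
    Module.finrank R (sumZeroSubmodule R ι) = Fintype.card ι - 1 := by
  classical
  rcases isEmpty_or_nonempty ι with _ | ⟨⟨i₀⟩⟩
  · simp [Module.finrank_zero_of_subsingleton]
  have h_ne : (∑ i, LinearMap.proj i : (ι → R) →ₗ[R] R) ≠ 0 := fun h => by
    simpa using LinearMap.congr_fun h (Pi.single i₀ 1)
  have h_rank := Module.Dual.finrank_ker_add_one_of_ne_zero h_ne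
  rw [Module.finrank_fintype_fun_eq_card] at h_rank
  exact Nat.eq_sub_of_add_eq h_rank

end SumZero

section GibbsStochastic

variable {R ι : Type*} [Fintype ι] [DecidableEq ι]

/-- The monoid of `d`-stochastic (Gibbs-stochastic) matrices: the column-stochastic matrices that
fix the vector `d`. -/
def gibbsStochastic [Semiring R] [PartialOrder R] [IsOrderedRing R] (d : ι → R) :
    Submonoid (Matrix ι ι R) where
  carrier := {A | A ∈ colStochastic R ι ∧ A *ᵥ d = d}
  mul_mem' {A B} hA hB := ⟨mul_mem hA.1 hB.1, by rw [← mulVec_mulVec, hB.2, hA.2]⟩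
  one_mem' := ⟨one_mem _, one_mulVec d⟩

/-- The polytope `M_d(y)` of all vectors `d`-majorized by `y`, that is, of all images of `y` under
`d`-stochastic matrices. -/
def majorizationPolytope [Semiring R] [PartialOrder R] [IsOrderedRing R] (d y : ι → R) :
    Set (ι → R) :=
  (· *ᵥ y) '' gibbsStochastic d

lemma self_mem_majorizationPolytope [Semiring R] [PartialOrder R] [IsOrderedRing R]
    (d y : ι → R) : y ∈ majorizationPolytope d y :=
  ⟨1, one_mem _, one_mulVec y⟩

lemma sum_eq_of_mem_majorizationPolytope [Semiring R] [PartialOrder R] [IsOrderedRing R]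
    {d y x : ι → R} (hx : x ∈ majorizationPolytope d y) : ∑ i, x i = ∑ i, y i := by
  obtain ⟨A, hA, rfl⟩ := hx
  exact sum_mulVec_of_mem_colStochastic hA.1

lemma vectorSpan_majorizationPolytope_le [Ring R] [PartialOrder R] [IsOrderedRing R]
    (d y : ι → R) : vectorSpan R (majorizationPolytope d y) ≤ sumZeroSubmodule R ι := by
  rw [vectorSpan, Submodule.span_le]
  rintro _ ⟨u, hu, v, hv, rfl⟩
  simp [mem_sumZeroSubmodule, sum_eq_of_mem_majorizationPolytope hu,
    sum_eq_of_mem_majorizationPolytope hv]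

lemma majorizationPolytope_smul_self [CommSemiring R] [PartialOrder R] [IsOrderedRing R]
    (c : R) (d : ι → R) : majorizationPolytope d (c • d) = {c • d} := by
  refine Set.eq_singleton_iff_unique_mem.2 ⟨self_mem_majorizationPolytope d _, ?_⟩
  rintro _ ⟨A, hA, rfl⟩
  exact (mulVec_smul A c d).trans (congrArg (c • ·) hA.2)

end GibbsStochastic

section MassTransfer

variable {𝕜 ι : Type*} [Field 𝕜] [DecidableEq ι]

/-- The matrix moving the amount `t * (x j / d j - x i / d i)` from coordinate `j` of a vector `x`
to coordinate `i`. It supplies the displacements along `e i - e j` inside a majorization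
polytope. -/
def massTransfer (d : ι → 𝕜) (i j : ι) (t : 𝕜) : Matrix ι ι 𝕜 :=
  1 + vecMulVec (Pi.single i 1 - Pi.single j 1) (Pi.single j (t / d j) - Pi.single i (t / d i))

lemma massTransfer_mulVec [Fintype ι] (d : ι → 𝕜) (i j : ι) (t : 𝕜) (x : ι → 𝕜) :
    massTransfer d i j t *ᵥ x =
      x + (t * (x j / d j - x i / d i)) • (Pi.single i 1 - Pi.single j 1 : ι → 𝕜) := by
  rw [massTransfer, add_mulVec, one_mulVec, vecMulVec_mulVec, sub_dotProduct, single_dotProduct,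
    single_dotProduct, op_smul_eq_smul]
  congr 2
  ring

lemma massTransfer_nonneg [LinearOrder 𝕜] [IsStrictOrderedRing 𝕜] {d : ι → 𝕜} {i j : ι} {t : 𝕜}
    (ht : 0 ≤ t) (hti : t ≤ d i) (htj : t ≤ d j) (a b : ι) : 0 ≤ massTransfer d i j t a b := by
  have hi_nonneg : 0 ≤ t / d i := div_nonneg ht (ht.trans hti)
  have hj_nonneg : 0 ≤ t / d j := div_nonneg ht (ht.trans htj)
  have hi_le_one : t / d i ≤ 1 := div_le_one_of_le₀ hti (ht.trans hti)
  have hj_le_one : t / d j ≤ 1 := div_le_one_of_le₀ htj (ht.trans htj)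
  -- The rank-one part is negative at most at `(i, i)` and `(j, j)`, where it is at least `-1`.
  simp only [massTransfer, Matrix.add_apply, one_apply, vecMulVec_apply, Pi.sub_apply,
    Pi.single_apply]
  generalize t / d i = p at *
  generalize t / d j = q at *
  split_ifs <;> grind

lemma massTransfer_mem_gibbsStochastic [Fintype ι] [LinearOrder 𝕜] [IsStrictOrderedRing 𝕜]
    {d : ι → 𝕜} {i j : ι} {t : 𝕜} (ht : 0 < t) (hti : t ≤ d i) (htj : t ≤ d j) :
    massTransfer d i j t ∈ gibbsStochastic d := by
  refine ⟨⟨massTransfer_nonneg ht.le hti htj, ?_⟩, ?_⟩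
  · simp [massTransfer, vecMul_add, vecMul_vecMulVec]
  · rw [massTransfer_mulVec, div_self (ht.trans_le hti).ne', div_self (ht.trans_le htj).ne']
    simp

end MassTransfer

section Dimension

variable {𝕜 ι : Type*} [Field 𝕜] [LinearOrder 𝕜] [IsStrictOrderedRing 𝕜] [Fintype ι]
  [DecidableEq ι] {d y : ι → 𝕜}

lemma exists_div_ne_of_exists_mem_majorizationPolytope_ne (hd : ∀ i, d i ≠ 0)
    (hy : ∃ x ∈ majorizationPolytope d y, x ≠ y) (i : ι) : ∃ k, y k / d k ≠ y i / d i := by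
  by_contra! h_ratio
  have hy_eq : y = (y i / d i) • d := by
    ext k
    exact (div_eq_iff (hd k)).1 (h_ratio k)
  obtain ⟨x, hx, hxy⟩ := hy
  rw [hy_eq, majorizationPolytope_smul_self, ← hy_eq] at hx
  exact hxy hx

lemma single_sub_single_mem_vectorSpan_of_div_ne {i j : ι} (hi : 0 < d i) (hj : 0 < d j)
    (hij : y j / d j ≠ y i / d i) :
    (Pi.single i 1 - Pi.single j 1 : ι → 𝕜) ∈ vectorSpan 𝕜 (majorizationPolytope d y) := by
  have ht : 0 < min (d i) (d j) := lt_min hi hj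
  have h_transfer : massTransfer d i j (min (d i) (d j)) *ᵥ y ∈ majorizationPolytope d y :=
    Set.mem_image_of_mem _
      (massTransfer_mem_gibbsStochastic ht (min_le_left _ _) (min_le_right _ _))
  have h_diff := vsub_mem_vectorSpan 𝕜 h_transfer (self_mem_majorizationPolytope d y)
  rw [massTransfer_mulVec, vsub_eq_sub, add_sub_cancel_left] at h_diff
  exact (Submodule.smul_mem_iff _ (mul_ne_zero ht.ne' (sub_ne_zero.2 hij))).1 h_diff

lemma single_sub_single_mem_vectorSpan (hd : ∀ i, 0 < d i)
    (hy : ∃ x ∈ majorizationPolytope d y, x ≠ y) (i j : ι) :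
    (Pi.single i 1 - Pi.single j 1 : ι → 𝕜) ∈ vectorSpan 𝕜 (majorizationPolytope d y) := by
  by_cases hij : y j / d j = y i / d i
  · obtain ⟨k, hk⟩ :=
      exists_div_ne_of_exists_mem_majorizationPolytope_ne (fun i => (hd i).ne') hy i
    have hik := single_sub_single_mem_vectorSpan_of_div_ne (hd i) (hd k) hk
    have hkj := single_sub_single_mem_vectorSpan_of_div_ne (hd k) (hd j) (hij.trans_ne hk.symm)
    simpa only [sub_add_sub_cancel] using add_mem hik hkj
  · exact single_sub_single_mem_vectorSpan_of_div_ne (hd i) (hd j) hij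

theorem vectorSpan_majorizationPolytope (hd : ∀ i, 0 < d i)
    (hy : ∃ x ∈ majorizationPolytope d y, x ≠ y) :
    vectorSpan 𝕜 (majorizationPolytope d y) = sumZeroSubmodule 𝕜 ι :=
  (vectorSpan_majorizationPolytope_le d y).antisymm <|
    sumZeroSubmodule_le_of_single_sub_single_mem (single_sub_single_mem_vectorSpan hd hy)

theorem stmt10_general (hd : ∀ i, 0 < d i) (hy : ∃ x ∈ majorizationPolytope d y, x ≠ y) :
    Module.finrank 𝕜 (vectorSpan 𝕜 (majorizationPolytope d y)) = Fintype.card ι - 1 := by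
  rw [vectorSpan_majorizationPolytope hd hy, finrank_sumZeroSubmodule]

end Dimension

lemma Mset_eq_majorizationPolytope {n : ℕ} (d y : Fin n → ℝ) :
    Mset d y = majorizationPolytope d y := by
  ext x
  simp [Mset, dStoch, majorizationPolytope, gibbsStochastic, mem_colStochastic_iff_sum, and_assoc]

lemma vectorSpan_eq_span_setOf_exists_sub {R V : Type*} [Ring R] [AddCommGroup V] [Module R V]
    (s : Set V) : vectorSpan R s = Submodule.span R {w | ∃ u ∈ s, ∃ v ∈ s, w = u - v} := by
  refine congrArg (Submodule.span R) (Set.ext fun w => ?_)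
  simp [Set.mem_vsub, eq_comm]

end

/-- If M_d(y) is not the singleton {y}, then its affine dimension is n − 1. -/
theorem stmt10 (n : ℕ) (hn : 1 ≤ n) (d : Fin n → ℝ) (hd : ∀ i, 0 < d i)
    (y : Fin n → ℝ) (hx : ∃ x ∈ Mset d y, x ≠ y) :
    Module.finrank ℝ
      (Submodule.span ℝ
        {w : Fin n → ℝ | ∃ u ∈ Mset d y, ∃ v ∈ Mset d y, w = u - v}) = n - 1 := by
  rw [Mset_eq_majorizationPolytope] at hx ⊢
  rw [← vectorSpan_eq_span_setOf_exists_sub, stmt10_general hd hx, Fintype.card_fin]
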